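/- The family (I_δ)_{δ>0} is uniformly continuous in δ on the set where I₁ is finite: for every ε>0 there exists η>0 such that for all δ₁,δ₂∈(0,∞) with |δ₁−δ₂|<η, sup over μ∈𝒫(V) with I₁(μ)<∞ of |I_{δ₁}(μ)−I_{δ₂}(μ)| is at most ε. -/

import Mathlib

open scoped BigOperators Classical ENNReal
open Filter Topology

noncomputable section
namespace ORRW

/-- Probability measures on a finite type `A`, topologized as a subset of `ℝ^A`. -/
abbrev ProbMeas (A : Type) [Fintype A] : Type :=
  {p : A → ℝ // (∀ a, 0 ≤ p a) ∧ ∑ a, p a = 1}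

/-- Relative entropy `R(γ‖ρ)` between two finitely supported "rows", valued in `EReal`,
with `+∞` when absolute continuity fails. -/
def relEnt {A : Type} [Fintype A] (γ ρ : A → ℝ) : EReal :=
  if ∀ a, ρ a = 0 → γ a = 0 then ((∑ a, γ a * Real.log (γ a / ρ a) : ℝ) : EReal)
  else (⊤ : EReal)

/-- `∫ R(q‖p) dν = Σ_a ν(a) · R(q(a,·)‖p(a,·))`. -/
def relEntInt {A : Type} [Fintype A] (ν : A → ℝ) (q p : A → A → ℝ) : EReal :=
  ∑ a, (ν a : EReal) * relEnt (q a) (p a)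

/-- `ν` is an invariant measure of the kernel `q`. -/
def Invariant {A : Type} [Fintype A] (ν : A → ℝ) (q : A → A → ℝ) : Prop :=
  ∀ y, ∑ x, ν x * q x y = ν y

/-- Extended-real logarithm: `⊥` at nonpositive arguments. -/
def elog (x : ℝ) : EReal := if x ≤ 0 then (⊥ : EReal) else ((Real.log x : ℝ) : EReal)

/-- Empirical measure of a finite trajectory `f : Fin (n+1) → A`. -/
def empMeas {A : Type} [Fintype A] [DecidableEq A] (n : ℕ) (f : Fin (n + 1) → A) :
    ProbMeas A :=
  ⟨fun a => ((Finset.univ.filter (fun i => f i = a)).card : ℝ) / (n + 1),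
    fun a => by positivity, by
      have key : ∑ a : A, ((Finset.univ.filter (fun i => f i = a)).card) = n + 1 := by
        have h := Finset.card_eq_sum_card_fiberwise
          (s := (Finset.univ : Finset (Fin (n + 1)))) (t := (Finset.univ : Finset A))
          (f := f) (fun i _ => Finset.mem_univ (f i))
        simpa using h.symm
      have key' : ∑ a : A, (((Finset.univ.filter (fun i => f i = a)).card : ℝ)) = (n : ℝ) + 1 := by
        have h2 := congrArg (fun m : ℕ => (m : ℝ)) key
        push_cast at h2
        simpa using h2
      rw [← Finset.sum_div, key', div_self (by positivity)]⟩

section Graph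

variable {V : Type} [Fintype V] [DecidableEq V]

/-- Weight of an edge given the set `F` of already traversed edges. -/
def gw (δ : ℝ) (F : Finset (Sym2 V)) (e : Sym2 V) : ℝ := if e ∈ F then δ else 1

/-- The transition kernel `p̂_F` on `V`. -/
def phat (G : SimpleGraph V) [DecidableRel G.Adj] (δ : ℝ) (F : Finset (Sym2 V))
    (x y : V) : ℝ :=
  if G.Adj x y then gw δ F s(x, y) / ∑ z ∈ G.neighborFinset x, gw δ F s(x, z) else 0

/-- Two edges are adjacent iff they share a vertex. -/
def edgeAdj (e e' : Sym2 V) : Prop := ∃ v, v ∈ e ∧ v ∈ e'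

/-- `x` is a vertex of the edge set `F`. -/
def memVerts (F : Finset (Sym2 V)) (x : V) : Prop := ∃ e ∈ F, x ∈ e

/-- `𝒯_G`: stochastic matrices on `V` adapted to `G`. -/
def TG (G : SimpleGraph V) : Set (V → V → ℝ) :=
  {q | (∀ x y, 0 ≤ q x y) ∧ (∀ x, ∑ y, q x y = 1) ∧ ∀ x y, q x y ≠ 0 → G.Adj x y}

/-- `𝒯(F)`: stochastic kernels from the vertex set of `F` to `V`, supported on `F`. -/
def TE (F : Finset (Sym2 V)) : Set (V → V → ℝ) :=
  {q | (∀ x y, 0 ≤ q x y) ∧ (∀ x, memVerts F x → ∑ y, q x y = 1) ∧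
    ∀ x y, q x y ≠ 0 → s(x, y) ∈ F}

/-- `ℰ`: admissible increasing sequences of traversed edge sets. -/
def seqE (G : SimpleGraph V) [DecidableRel G.Adj] (v₁ : V) :
    Set (Fin G.edgeFinset.card → Finset (Sym2 V)) :=
  {Es | (∀ k, Es k ⊆ G.edgeFinset) ∧ (∀ k, (Es k).card = (k : ℕ) + 1) ∧
    (∀ k l : Fin G.edgeFinset.card, (k : ℕ) + 1 = (l : ℕ) → Es k ⊂ Es l) ∧
    (∀ k : Fin G.edgeFinset.card, (k : ℕ) = 0 → ∃ e ∈ Es k, v₁ ∈ e) ∧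
    (∀ k l : Fin G.edgeFinset.card, (k : ℕ) + 1 = (l : ℕ) →
      ∀ e ∈ Es l \ Es k, ∃ e' ∈ Es k, edgeAdj e e')}

/-- The rate function `I_δ`. -/
def Ifun (G : SimpleGraph V) [DecidableRel G.Adj] (v₁ : V) (δ : ℝ) (ν : ProbMeas V) : EReal :=
  sInf { c : EReal |
    ∃ (νs : Fin G.edgeFinset.card → ProbMeas V) (r : Fin G.edgeFinset.card → ℝ)
      (Es : Fin G.edgeFinset.card → Finset (Sym2 V))
      (qs : Fin G.edgeFinset.card → V → V → ℝ),
      Es ∈ seqE G v₁ ∧ (∀ k, 0 ≤ r k) ∧ (∑ k, r k = 1) ∧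
      (∀ k x, (νs k).1 x ≠ 0 → memVerts (Es k) x) ∧
      (∀ x, ∑ k, r k * (νs k).1 x = ν.1 x) ∧
      (∀ k, qs k ∈ TE (Es k)) ∧ (∀ k, Invariant (νs k).1 (qs k)) ∧
      c = ∑ k, ((r k : ℝ) : EReal) * relEntInt (νs k).1 (qs k) (phat G δ (Es k)) }

/-- Edges traversed along a path, given as a list of consecutively visited vertices. -/
def pathEdges : List V → Finset (Sym2 V)
  | [] => ∅
  | [_] => ∅
  | x :: y :: t => insert s(x, y) (pathEdges (y :: t))

/-- Product of one-step ORRW transition probabilities along a trajectory,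
the trajectory being listed in reverse chronological order. -/
def stepsProb (G : SimpleGraph V) [DecidableRel G.Adj] (δ : ℝ) : List V → ℝ
  | [] => 1
  | [_] => 1
  | y :: x :: t => phat G δ (pathEdges (x :: t).reverse) x y * stepsProb G δ (x :: t)

/-- The law of `(X_0, …, X_n)` for the `δ`-ORRW started at `v₁`. -/
def trajProb (G : SimpleGraph V) [DecidableRel G.Adj] (δ : ℝ) (v₁ : V) (n : ℕ)
    (f : Fin (n + 1) → V) : ℝ :=
  if f 0 = v₁ then stepsProb G δ (List.ofFn f).reverse else 0

/-- `P_{v₁}(L_{n+1} ∈ C)`: the probability that the empirical measure of the first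
`n+1` positions of the `δ`-ORRW lies in `C`. -/
def probEmp (G : SimpleGraph V) [DecidableRel G.Adj] (δ : ℝ) (v₁ : V) (n : ℕ)
    (C : Set (ProbMeas V)) : ℝ :=
  ∑ f : Fin (n + 1) → V, if empMeas n f ∈ C then trajProb G δ v₁ n f else 0

/-- The family `𝒮` of edge sets of connected subgraphs having an edge at `v₁`. -/
def scrS (G : SimpleGraph V) [DecidableRel G.Adj] (v₁ : V) : Set (Finset (Sym2 V)) :=
  {F | F ⊆ G.edgeFinset ∧ (∃ e ∈ F, v₁ ∈ e) ∧
    ∀ x y : V, memVerts F x → memVerts F y →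
      (SimpleGraph.fromEdgeSet (↑F : Set (Sym2 V))).Reachable x y}

/-- `𝒮₀` is a decreasing subset of `𝒮`. -/
def DecreasingIn (G : SimpleGraph V) [DecidableRel G.Adj] (v₁ : V)
    (S0 : Set (Finset (Sym2 V))) : Prop :=
  ∀ F₁ F₂, F₁ ∈ scrS G v₁ → F₂ ∈ scrS G v₁ → F₁ ⊆ F₂ → F₂ ∈ S0 → F₁ ∈ S0

/-- `P_{v₁}(T_{𝒮₀} > n)`. -/
def probTgt (G : SimpleGraph V) [DecidableRel G.Adj] (δ : ℝ) (v₁ : V)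
    (S0 : Set (Finset (Sym2 V))) (n : ℕ) : ℝ :=
  ∑ f : Fin (n + 1) → V,
    if ∀ k, 1 ≤ k → k ≤ n → pathEdges ((List.ofFn f).take (k + 1)) ∈ S0 then
      trajProb G δ v₁ n f
    else 0

/-- `P_{v₁}(C_E > n)` for the edge cover time `C_E`. -/
def probCgt (G : SimpleGraph V) [DecidableRel G.Adj] (δ : ℝ) (v₁ : V) (n : ℕ) : ℝ :=
  ∑ f : Fin (n + 1) → V,
    if ¬ G.edgeFinset ⊆ pathEdges (List.ofFn f) then trajProb G δ v₁ n f else 0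

/-- `E_{v₁}[exp (α T_{𝒮₀})]`, valued in `ℝ≥0∞`; the stopping time takes values in
`{1, 2, …} ∪ {∞}`. -/
def expT (G : SimpleGraph V) [DecidableRel G.Adj] (δ : ℝ) (v₁ : V)
    (S0 : Set (Finset (Sym2 V))) (α : ℝ) : ℝ≥0∞ :=
  (∑' n : ℕ, ENNReal.ofReal
      (Real.exp (α * (n + 1)) * (probTgt G δ v₁ S0 n - probTgt G δ v₁ S0 (n + 1)))) +
    (if 0 < α then (⊤ : ℝ≥0∞) else if α = 0 then 1 else 0) *
      ENNReal.ofReal (⨅ n : ℕ, probTgt G δ v₁ S0 n)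

/-- `E_{v₁}[exp (α C_E)]`, valued in `ℝ≥0∞`. -/
def expC (G : SimpleGraph V) [DecidableRel G.Adj] (δ : ℝ) (v₁ : V) (α : ℝ) : ℝ≥0∞ :=
  (∑' n : ℕ, ENNReal.ofReal
      (Real.exp (α * (n + 1)) * (probCgt G δ v₁ n - probCgt G δ v₁ (n + 1)))) +
    (if 0 < α then (⊤ : ℝ≥0∞) else if α = 0 then 1 else 0) *
      ENNReal.ofReal (⨅ n : ℕ, probCgt G δ v₁ n)

/-- The critical exponent `α_c(δ)` attached to a family `𝒮₀` of edge sets. -/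
def alphaC (G : SimpleGraph V) [DecidableRel G.Adj] (δ : ℝ)
    (S0 : Set (Finset (Sym2 V))) : EReal :=
  sInf { c : EReal | ∃ (ν : ProbMeas V) (F : Finset (Sym2 V)) (q : V → V → ℝ),
    F ∈ S0 ∧ q ∈ TE F ∧ (∀ x, ν.1 x ≠ 0 → memVerts F x) ∧ Invariant ν.1 q ∧
    c = relEntInt ν.1 q (phat G δ F) }

/-- `α_c^1(δ)`: the critical exponent for the cover time. -/
def alphaC1 (G : SimpleGraph V) [DecidableRel G.Adj] (v₁ : V) (δ : ℝ) : EReal :=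
  alphaC G δ (scrS G v₁ \ {G.edgeFinset})

end Graph

section Lifted

variable {V : Type} [Fintype V] [LinearOrder V]

/-- Smaller endpoint of an unordered pair. -/
def sym2lo (e : Sym2 V) : V := Sym2.lift ⟨fun a b => min a b, fun a b => min_comm a b⟩ e

/-- Larger endpoint of an unordered pair. -/
def sym2hi (e : Sym2 V) : V := Sym2.lift ⟨fun a b => max a b, fun a b => max_comm a b⟩ e

/-- `V_S = E × {-1, 1}`: vertex set of the lifted directed graph `S`
(`true` plays the role of `+1`). -/
abbrev VSet (G : SimpleGraph V) [DecidableRel G.Adj] : Type :=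
  {e : Sym2 V // e ∈ G.edgeFinset} × Bool

/-- Tail `z⁻` of an oriented edge. -/
def zm (G : SimpleGraph V) [DecidableRel G.Adj] (z : VSet G) : V :=
  if z.2 then sym2lo z.1.1 else sym2hi z.1.1

/-- Head `z⁺` of an oriented edge. -/
def zp (G : SimpleGraph V) [DecidableRel G.Adj] (z : VSet G) : V :=
  if z.2 then sym2hi z.1.1 else sym2lo z.1.1

/-- The kernel `p_F` on the lifted directed graph `S`. -/
def pS (G : SimpleGraph V) [DecidableRel G.Adj] (δ : ℝ) (F : Finset (Sym2 V))
    (z₁ z₂ : VSet G) : ℝ :=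
  if zp G z₁ = zm G z₂ then
    gw δ F z₂.1.1 / ∑ w : VSet G, (if zp G z₁ = zm G w then gw δ F w.1.1 else 0)
  else 0

/-- `𝒯_S`: stochastic matrices on `V_S` moving along orientations. -/
def TS (G : SimpleGraph V) [DecidableRel G.Adj] : Set (VSet G → VSet G → ℝ) :=
  {q | (∀ z w, 0 ≤ q z w) ∧ (∀ z, ∑ w, q z w = 1) ∧ ∀ z w, q z w ≠ 0 → zp G z = zm G w}

/-- `𝒞(𝒮₀)`: probability measures on `V_S` whose first marginal is supported in
some member of `𝒮₀`. -/
def CC (G : SimpleGraph V) [DecidableRel G.Adj] (S0 : Set (Finset (Sym2 V))) :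
    Set (ProbMeas (VSet G)) :=
  {μ | ∃ F ∈ S0, ∀ z : VSet G, μ.1 z ≠ 0 → z.1.1 ∈ F}

/-- `Λ_{δ,𝒮₀}`. -/
def Lam (G : SimpleGraph V) [DecidableRel G.Adj] (v₁ : V) (δ : ℝ)
    (S0 : Set (Finset (Sym2 V))) (μ : ProbMeas (VSet G)) : EReal :=
  sInf { c : EReal |
    ∃ (μs : Fin G.edgeFinset.card → ProbMeas (VSet G)) (r : Fin G.edgeFinset.card → ℝ)
      (Es : Fin G.edgeFinset.card → Finset (Sym2 V))
      (qs : Fin G.edgeFinset.card → VSet G → VSet G → ℝ),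
      Es ∈ seqE G v₁ ∧ (∀ k, 0 ≤ r k) ∧ (∀ k, Es k ∉ S0 → r k = 0) ∧ (∑ k, r k = 1) ∧
      (∀ k z, (μs k).1 z ≠ 0 → z.1.1 ∈ Es k) ∧
      (∀ z, ∑ k, r k * (μs k).1 z = μ.1 z) ∧
      (∀ k, qs k ∈ TS G) ∧ (∀ k, Invariant (μs k).1 (qs k)) ∧
      c = ∑ k, ((r k : ℝ) : EReal) * relEntInt (μs k).1 (qs k) (pS G δ (Es k)) }

/-- `Λ^z_{δ,𝒮₀}`. -/
def LamZ (G : SimpleGraph V) [DecidableRel G.Adj] (v₁ : V) (δ : ℝ)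
    (S0 : Set (Finset (Sym2 V))) (z : VSet G) (μ : ProbMeas (VSet G)) : EReal :=
  sInf { c : EReal |
    ∃ (μs : Fin G.edgeFinset.card → ProbMeas (VSet G)) (r : Fin G.edgeFinset.card → ℝ)
      (Es : Fin G.edgeFinset.card → Finset (Sym2 V))
      (qs : Fin G.edgeFinset.card → VSet G → VSet G → ℝ),
      Es ∈ seqE G v₁ ∧ (∀ k : Fin G.edgeFinset.card, (k : ℕ) = 0 → Es k = {z.1.1}) ∧
      (∀ k, 0 ≤ r k) ∧ (∀ k, Es k ∉ S0 → r k = 0) ∧ (∑ k, r k = 1) ∧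
      (∀ k w, (μs k).1 w ≠ 0 → w.1.1 ∈ Es k) ∧
      (∀ w, ∑ k, r k * (μs k).1 w = μ.1 w) ∧
      (∀ k, qs k ∈ TS G) ∧ (∀ k, Invariant (μs k).1 (qs k)) ∧
      c = ∑ k, ((r k : ℝ) : EReal) * relEntInt (μs k).1 (qs k) (pS G δ (Es k)) }

/-- `Λ₁`: the Donsker–Varadhan functional for the simple random walk on `S`
(whose kernel is `pS` with `δ = 1`). -/
def Lam1 (G : SimpleGraph V) [DecidableRel G.Adj] (μ : ProbMeas (VSet G)) : EReal :=
  sInf { c : EReal | ∃ q ∈ TS G, Invariant μ.1 q ∧ c = relEntInt μ.1 q (pS G 1 ∅) }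

/-- Boundary `∂F` of an edge set: edges of `F` adjacent to some edge outside `F`. -/
def bdry (G : SimpleGraph V) [DecidableRel G.Adj] (F : Finset (Sym2 V)) : Finset (Sym2 V) :=
  F.filter fun e => ∃ e' ∈ G.edgeFinset \ F, edgeAdj e e'

/-- Out-degree `d(z)` of `z` in `S`. -/
def outDeg (G : SimpleGraph V) [DecidableRel G.Adj] (z : VSet G) : ℕ :=
  (Finset.univ.filter (fun w : VSet G => zp G z = zm G w)).card

/-- Number `k(z)` of out-neighbours of `z` lying in `F × {-1, 1}`. -/
def outDegIn (G : SimpleGraph V) [DecidableRel G.Adj] (F : Finset (Sym2 V))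
    (z : VSet G) : ℕ :=
  (Finset.univ.filter (fun w : VSet G => zp G z = zm G w ∧ w.1.1 ∈ F)).card

/-- The law of `(Z_0, …, Z_n)` for the lifted `δ`-ORRW conditioned on `Z_0 = z`. -/
def liftTraj (G : SimpleGraph V) [DecidableRel G.Adj] (δ : ℝ) (z : VSet G) (n : ℕ)
    (g : Fin (n + 1) → VSet G) : ℝ :=
  if g 0 = z then
    ∏ i : Fin n,
      pS G δ ((Finset.Iic i.castSucc).image (fun j => (g j).1.1))
        (g i.castSucc) (g i.succ)
  else 0

/-- The restricted logarithmic Laplace functional `W^{n+1}_{𝒮₀}(z)`. -/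
def Wres (G : SimpleGraph V) [DecidableRel G.Adj] (δ : ℝ) (z : VSet G)
    (S0 : Set (Finset (Sym2 V))) (h : ProbMeas (VSet G) → ℝ) (n : ℕ) : EReal :=
  if 0 < ∑ g : Fin (n + 1) → VSet G,
      (if empMeas n g ∈ CC G S0 then liftTraj G δ z n g else 0) then
    ((-((((n : ℝ) + 1))⁻¹ * Real.log (∑ g : Fin (n + 1) → VSet G,
      if empMeas n g ∈ CC G S0 then
        Real.exp (-((n : ℝ) + 1) * h (empMeas n g)) * liftTraj G δ z n g
      else 0)) : ℝ) : EReal)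
  else (⊤ : EReal)

end Lifted

/-!
If `p̂_F` for `δ` is on `F` at most `t` times `p̂_F` for `δ'`, then passing from `δ` to `δ'` raises
the cost of a fixed decomposition of `μ` by at most `log t`. For `δ ≤ δ'` one can take `t = 1`, and
`t = δ' / δ` for the reverse passage, so `I_δ` is nonincreasing in `δ` and
`I_δ ≤ I_δ' + log (δ' / δ)`, which is at most `I_δ' + (δ' - δ)` once `δ ≥ 1`.

This estimate degenerates as `δ → 0`, but `I_δ` is constant on `(0, 1]`. Indeed for `δ = 1` all the
kernels `p̂_F` are the simple random walk, which is also `p̂_E` for every `δ`. Convexity of relative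
entropy therefore allows a decomposition of `μ` to be replaced by its average, placed entirely at
the last level `F = E`, so that `I_δ ≤ I₁`. Thus `I_δ = I_(max δ 1)`, and `δ ↦ I_δ` is 1-Lipschitz.
-/

section RelativeEntropy

variable {A : Type} [Fintype A]

/-- The relative entropy `R(γ‖ρ)` as a real number. It is meaningful only when `γ` is absolutely
continuous with respect to `ρ`; points where `ρ` vanishes contribute `0`. -/
def realRelEnt (γ ρ : A → ℝ) : ℝ := ∑ a, γ a * Real.log (γ a / ρ a)

/-- The integrated relative entropy `∫ R(q‖p) dν` as a real number, with the convention of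
`realRelEnt`. -/
def realRelEntInt (ν : A → ℝ) (q p : A → A → ℝ) : ℝ := ∑ x, ν x * realRelEnt (q x) (p x)

lemma ereal_coe_sum {ι : Type*} (s : Finset ι) (f : ι → ℝ) :
    ((∑ i ∈ s, f i : ℝ) : EReal) = ∑ i ∈ s, (f i : EReal) :=
  map_sum (⟨⟨Real.toEReal, EReal.coe_zero⟩, EReal.coe_add⟩ : ℝ →+ EReal) f s

lemma relEnt_eq_coe {γ ρ : A → ℝ} (h : ∀ a, ρ a = 0 → γ a = 0) :
    relEnt γ ρ = (realRelEnt γ ρ : EReal) :=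
  if_pos h

lemma relEntInt_eq_coe {q p : A → A → ℝ} (h : ∀ x y, p x y = 0 → q x y = 0) (ν : A → ℝ) :
    relEntInt ν q p = (realRelEntInt ν q p : EReal) := by
  simp only [relEntInt, realRelEntInt, ereal_coe_sum, EReal.coe_mul, relEnt_eq_coe (h _)]

lemma realRelEnt_le_add_log {γ ρ ρ' : A → ℝ} {t : ℝ} (ht : 0 < t) (hγ : γ ∈ stdSimplex ℝ A)
    (hρ : ∀ a, γ a ≠ 0 → 0 < ρ a) (hρρ' : ∀ a, γ a ≠ 0 → ρ a ≤ t * ρ' a) :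
    realRelEnt γ ρ' ≤ realRelEnt γ ρ + Real.log t := by
  calc realRelEnt γ ρ'
      ≤ ∑ a, (γ a * Real.log (γ a / ρ a) + γ a * Real.log t) := by
        refine Finset.sum_le_sum fun a _ => ?_
        by_cases ha : γ a = 0
        · simp [ha]
        have hρ'a : 0 < ρ' a := pos_of_mul_pos_right ((hρ a ha).trans_le (hρρ' a ha)) ht.le
        have hlog : Real.log (ρ a) ≤ Real.log t + Real.log (ρ' a) :=
          (Real.log_le_log (hρ a ha) (hρρ' a ha)).trans_eq (Real.log_mul ht.ne' hρ'a.ne')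
        rw [← mul_add, Real.log_div ha (hρ a ha).ne', Real.log_div ha hρ'a.ne']
        exact mul_le_mul_of_nonneg_left (by linarith) (hγ.1 a)
    _ = realRelEnt γ ρ + Real.log t := by
        rw [Finset.sum_add_distrib, ← Finset.sum_mul, hγ.2, one_mul, realRelEnt]

lemma realRelEntInt_le_add_log {ν : A → ℝ} {q p p' : A → A → ℝ} {t : ℝ} (ht : 0 < t)
    (hν : ν ∈ stdSimplex ℝ A) (hq : ∀ x, ν x ≠ 0 → q x ∈ stdSimplex ℝ A)
    (hp : ∀ x y, q x y ≠ 0 → 0 < p x y) (hpp' : ∀ x y, q x y ≠ 0 → p x y ≤ t * p' x y) :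
    realRelEntInt ν q p' ≤ realRelEntInt ν q p + Real.log t := by
  calc realRelEntInt ν q p'
      ≤ ∑ x, (ν x * realRelEnt (q x) (p x) + ν x * Real.log t) := by
        refine Finset.sum_le_sum fun x _ => ?_
        by_cases hx : ν x = 0
        · simp [hx]
        rw [← mul_add]
        exact mul_le_mul_of_nonneg_left
          (realRelEnt_le_add_log ht (hq x hx) (hp x) (hpp' x)) (hν.1 x)
    _ = realRelEntInt ν q p + Real.log t := by
        rw [Finset.sum_add_distrib, ← Finset.sum_mul, hν.2, one_mul, realRelEntInt]

lemma convexOn_mul_log_div (c : ℝ) :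
    ConvexOn ℝ (Set.Ici 0) fun s : ℝ => s * Real.log (s / c) := by
  by_cases hc : c = 0
  · simpa [hc] using convexOn_const (𝕜 := ℝ) (0 : ℝ) (convex_Ici (0 : ℝ))
  have hlinear : ConvexOn ℝ (Set.Ici 0) fun s : ℝ => s * -Real.log c :=
    (LinearMap.mulRight ℝ (-Real.log c)).convexOn (convex_Ici 0)
  refine (Real.convexOn_mul_log.add hlinear).congr fun s _ => ?_
  by_cases hs : s = 0
  · simp [hs]
  · simp only [Pi.add_apply, Real.log_div hs hc]
    ring

lemma convexOn_realRelEnt (ρ : A → ℝ) :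
    ConvexOn ℝ (Set.Ici 0) fun γ : A → ℝ => realRelEnt γ ρ := by
  refine ⟨convex_Ici 0, fun γ hγ γ' hγ' s t hs ht hst => ?_⟩
  simp only [realRelEnt, Finset.smul_sum, ← Finset.sum_add_distrib]
  exact Finset.sum_le_sum fun a _ =>
    (convexOn_mul_log_div (ρ a)).2 (hγ a) (hγ' a) hs ht hst

end RelativeEntropy

section MixedKernel

variable {ι : Type*} {A : Type} [Fintype ι] {w : ι → A → ℝ} {q : ι → A → A → ℝ} {q₀ : A → A → ℝ}
  {x : A}

/-- The average of the kernels `q k` in which row `x` of `q k` has weight `w k x`. Rows of total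
weight `0` are taken from `q₀`, so that they can still be stochastic. -/
def mixKernel (w : ι → A → ℝ) (q : ι → A → A → ℝ) (q₀ : A → A → ℝ) (x : A) : A → ℝ :=
  if ∑ k, w k x = 0 then q₀ x else Finset.univ.centerMass (w · x) (q · x)

lemma mixKernel_mem {S : Set (A → ℝ)} (hS : Convex ℝ S) (hw : ∀ k, 0 ≤ w k x)
    (hq : ∀ k, w k x ≠ 0 → q k x ∈ S) (hq₀ : q₀ x ∈ S) : mixKernel w q q₀ x ∈ S := by
  unfold mixKernel
  split_ifs with h
  · exact hq₀
  rw [← Finset.centerMass_filter_ne_zero]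
  refine hS.centerMass_mem (fun k _ => hw k) ?_ fun k hk => hq k (Finset.mem_filter.1 hk).2
  rw [Finset.sum_filter_ne_zero]
  exact (Finset.sum_nonneg fun k _ => hw k).lt_of_ne' h

lemma sum_mul_mixKernel (hw : ∀ k, 0 ≤ w k x) (y : A) :
    (∑ k, w k x) * mixKernel w q q₀ x y = ∑ k, w k x * q k x y := by
  by_cases h : ∑ k, w k x = 0
  · have hw0 : ∀ k, w k x = 0 := fun k =>
      (Finset.sum_eq_zero_iff_of_nonneg fun k _ => hw k).1 h k (Finset.mem_univ k)
    simp [hw0]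
  · simp [mixKernel, h, Finset.centerMass, Finset.sum_apply]

lemma sum_mul_realRelEnt_mixKernel_le [Fintype A] (hw : ∀ k, 0 ≤ w k x) (hq : ∀ k, 0 ≤ q k x)
    (ρ : A → ℝ) :
    (∑ k, w k x) * realRelEnt (mixKernel w q q₀ x) ρ ≤ ∑ k, w k x * realRelEnt (q k x) ρ := by
  have hsum : 0 ≤ ∑ k, w k x := Finset.sum_nonneg fun k _ => hw k
  rcases hsum.eq_or_lt with h | h
  · have hw0 : ∀ k, w k x = 0 := fun k =>
      (Finset.sum_eq_zero_iff_of_nonneg fun k _ => hw k).1 h.symm k (Finset.mem_univ k)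
    simp [hw0]
  have hjensen := (convexOn_realRelEnt ρ).map_centerMass_le (t := Finset.univ)
    (fun k _ => hw k) h fun k _ => hq k
  rw [mixKernel, if_neg h.ne']
  simpa [Finset.centerMass, h.ne'] using mul_le_mul_of_nonneg_left hjensen hsum

end MixedKernel

section KernelRows

variable {V : Type} [Fintype V]

/-- The possible rows at `x` of a kernel in `𝒯(F)`. -/
def rowsTE (F : Finset (Sym2 V)) (x : V) : Set (V → ℝ) :=
  {γ | (∀ y, 0 ≤ γ y) ∧ (memVerts F x → ∑ y, γ y = 1) ∧ ∀ y, γ y ≠ 0 → s(x, y) ∈ F}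

lemma mem_TE_iff {F : Finset (Sym2 V)} {q : V → V → ℝ} : q ∈ TE F ↔ ∀ x, q x ∈ rowsTE F x := by
  simp only [TE, rowsTE, Set.mem_ofPred_eq, forall_and]

lemma convex_rowsTE (F : Finset (Sym2 V)) (x : V) : Convex ℝ (rowsTE F x) := by
  rintro γ ⟨hγ, hγ1, hγF⟩ γ' ⟨hγ', hγ'1, hγ'F⟩ s t hs ht hst
  refine ⟨fun y => ?_, fun hx => ?_, fun y hy => ?_⟩
  · exact add_nonneg (mul_nonneg hs (hγ y)) (mul_nonneg ht (hγ' y))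
  · simp [Finset.sum_add_distrib, ← Finset.mul_sum, hγ1 hx, hγ'1 hx, hst]
  · by_contra hyF
    have h0 : γ y = 0 := by_contra fun h => hyF (hγF y h)
    have h0' : γ' y = 0 := by_contra fun h => hyF (hγ'F y h)
    simp [h0, h0'] at hy

end KernelRows

section EdgeWeight

variable {V : Type} [DecidableEq V] {δ δ' : ℝ}

lemma gw_pos (hδ : 0 < δ) (F : Finset (Sym2 V)) (e : Sym2 V) : 0 < gw δ F e := by
  unfold gw
  split_ifs <;> positivity

lemma gw_mono (F : Finset (Sym2 V)) (e : Sym2 V) : Monotone fun δ => gw δ F e := by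
  intro δ δ' hle
  simp only [gw]
  split_ifs
  exacts [hle, le_rfl]

lemma mul_gw_le_mul_gw (hle : δ ≤ δ') (F : Finset (Sym2 V)) (e : Sym2 V) :
    δ * gw δ' F e ≤ δ' * gw δ F e := by
  unfold gw
  split_ifs <;> linarith

end EdgeWeight

section Kernel

variable {V : Type} [Fintype V] [DecidableEq V] {G : SimpleGraph V} [DecidableRel G.Adj]
  {δ δ' : ℝ} {F : Finset (Sym2 V)} {x y : V}

lemma sum_gw_pos (hδ : 0 < δ) (F : Finset (Sym2 V)) (hxy : G.Adj x y) :
    0 < ∑ z ∈ G.neighborFinset x, gw δ F s(x, z) :=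
  Finset.sum_pos (fun _ _ => gw_pos hδ F _) ⟨y, (G.mem_neighborFinset x y).2 hxy⟩

lemma phat_pos (hδ : 0 < δ) (F : Finset (Sym2 V)) (hxy : G.Adj x y) : 0 < phat G δ F x y := by
  rw [phat, if_pos hxy]
  exact div_pos (gw_pos hδ F _) (sum_gw_pos hδ F hxy)

lemma phat_le_phat (hδ : 0 < δ) (hle : δ ≤ δ') (hxy : s(x, y) ∈ F) :
    phat G δ F x y ≤ phat G δ' F x y := by
  by_cases hadj : G.Adj x y
  · have hgw : ∀ c, gw c F s(x, y) = c := fun c => if_pos hxy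
    rw [phat, phat, if_pos hadj, if_pos hadj, hgw, hgw,
      div_le_div_iff₀ (sum_gw_pos hδ F hadj) (sum_gw_pos (hδ.trans_le hle) F hadj),
      Finset.mul_sum, Finset.mul_sum]
    exact Finset.sum_le_sum fun z _ => mul_gw_le_mul_gw hle F s(x, z)
  · simp [phat, hadj]

lemma phat_le_div_mul_phat (hδ : 0 < δ) (hle : δ ≤ δ') (F : Finset (Sym2 V)) (x y : V) :
    phat G δ' F x y ≤ δ' / δ * phat G δ F x y := by
  by_cases hadj : G.Adj x y
  · simp only [phat, if_pos hadj]
    have hnum : gw δ' F s(x, y) ≤ δ' / δ * gw δ F s(x, y) := by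
      rw [div_mul_eq_mul_div, le_div_iff₀' hδ]
      exact mul_gw_le_mul_gw hle F s(x, y)
    have hden : ∑ z ∈ G.neighborFinset x, gw δ F s(x, z) ≤
        ∑ z ∈ G.neighborFinset x, gw δ' F s(x, z) :=
      Finset.sum_le_sum fun z _ => gw_mono F s(x, z) hle
    rw [← mul_div_assoc]
    exact div_le_div₀ ((gw_pos (hδ.trans_le hle) F _).le.trans hnum) hnum
      (sum_gw_pos hδ F hadj) hden
  · simp [phat, hadj]

lemma phat_edgeFinset (hδ : δ ≠ 0) (F : Finset (Sym2 V)) :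
    phat G δ G.edgeFinset = phat G 1 F := by
  funext x y
  by_cases hadj : G.Adj x y
  · have hfull : ∀ z, G.Adj x z → gw δ G.edgeFinset s(x, z) = δ * 1 := fun z hz => by
      simp [gw, hz]
    have hone : ∀ e, gw 1 F e = 1 := fun e => ite_self 1
    have hsum : ∑ z ∈ G.neighborFinset x, gw δ G.edgeFinset s(x, z) =
        δ * ∑ z ∈ G.neighborFinset x, gw 1 F s(x, z) := by
      rw [Finset.mul_sum]
      refine Finset.sum_congr rfl fun z hz => ?_
      rw [hfull z ((G.mem_neighborFinset x z).1 hz), hone]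
    rw [phat, phat, if_pos hadj, if_pos hadj, hsum, hfull y hadj, hone, mul_div_mul_left _ _ hδ]
  · simp [phat, hadj]

lemma phat_pos_of_mem_TE {q : V → V → ℝ} (hδ : 0 < δ) (hF : F ⊆ G.edgeFinset) (hq : q ∈ TE F)
    (hxy : q x y ≠ 0) : 0 < phat G δ F x y :=
  phat_pos hδ F (by simpa using hF (hq.2.2 x y hxy))

end Kernel

section RateFunction

variable {V : Type} [Fintype V] [DecidableEq V] {G : SimpleGraph V} [DecidableRel G.Adj]
  {δ δ' : ℝ} {v₁ : V} {μ : ProbMeas V}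

/-- The elements `(ν_k, r_k, E_k, q̂_k)_k` of `Â(μ)`; the level `k` is indexed from `0`, so that
`edges k` has `k + 1` elements. -/
structure Decomposition (G : SimpleGraph V) [DecidableRel G.Adj] (v₁ : V) (μ : ProbMeas V) where
  meas : Fin G.edgeFinset.card → ProbMeas V
  weight : Fin G.edgeFinset.card → ℝ
  edges : Fin G.edgeFinset.card → Finset (Sym2 V)
  kernel : Fin G.edgeFinset.card → V → V → ℝ
  edges_mem : edges ∈ seqE G v₁
  weight_mem : weight ∈ stdSimplex ℝ (Fin G.edgeFinset.card)
  memVerts_of_meas_ne_zero : ∀ k x, (meas k).1 x ≠ 0 → memVerts (edges k) x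
  sum_weight_mul_meas : ∀ x, ∑ k, weight k * (meas k).1 x = μ.1 x
  kernel_mem : ∀ k, kernel k ∈ TE (edges k)
  invariant : ∀ k, Invariant (meas k).1 (kernel k)

namespace Decomposition

/-- The objective `∑ r_k ∫ R(q̂_k‖p̂_{E_k}) dν_k` minimized by `I_δ`. -/
def cost (d : Decomposition G v₁ μ) (δ : ℝ) : ℝ :=
  ∑ k, d.weight k * realRelEntInt (d.meas k).1 (d.kernel k) (phat G δ (d.edges k))

lemma edges_subset (d : Decomposition G v₁ μ) (k : Fin G.edgeFinset.card) :
    d.edges k ⊆ G.edgeFinset :=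
  d.edges_mem.1 k

lemma coe_cost (d : Decomposition G v₁ μ) (hδ : 0 < δ) :
    (d.cost δ : EReal) =
      ∑ k, (d.weight k : EReal) *
        relEntInt (d.meas k).1 (d.kernel k) (phat G δ (d.edges k)) := by
  have hac : ∀ k x y, phat G δ (d.edges k) x y = 0 → d.kernel k x y = 0 := fun k x y h =>
    by_contra fun hne => (phat_pos_of_mem_TE hδ (d.edges_subset k) (d.kernel_mem k) hne).ne' h
  simp only [cost, ereal_coe_sum, EReal.coe_mul, relEntInt_eq_coe (hac _)]

lemma cost_le_cost_add_log (d : Decomposition G v₁ μ) {t : ℝ} (hδ : 0 < δ) (ht : 0 < t)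
    (hp : ∀ (F : Finset (Sym2 V)) (x y : V), s(x, y) ∈ F →
      phat G δ F x y ≤ t * phat G δ' F x y) :
    d.cost δ' ≤ d.cost δ + Real.log t := by
  have hlevel : ∀ k, realRelEntInt (d.meas k).1 (d.kernel k) (phat G δ' (d.edges k)) ≤
      realRelEntInt (d.meas k).1 (d.kernel k) (phat G δ (d.edges k)) + Real.log t := fun k =>
    realRelEntInt_le_add_log ht (d.meas k).2
      (fun x hx => ⟨(d.kernel_mem k).1 x,
        (d.kernel_mem k).2.1 x (d.memVerts_of_meas_ne_zero k x hx)⟩)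
      (fun _ _ => phat_pos_of_mem_TE hδ (d.edges_subset k) (d.kernel_mem k))
      (fun x y hxy => hp _ x y ((d.kernel_mem k).2.2 x y hxy))
  calc d.cost δ'
      ≤ ∑ k, d.weight k *
          (realRelEntInt (d.meas k).1 (d.kernel k) (phat G δ (d.edges k)) + Real.log t) :=
        Finset.sum_le_sum fun k _ => mul_le_mul_of_nonneg_left (hlevel k) (d.weight_mem.1 k)
    _ = d.cost δ + Real.log t := by
        simp only [mul_add, Finset.sum_add_distrib, ← Finset.sum_mul, d.weight_mem.2, one_mul, cost]

lemma exists_edges_eq_edgeFinset (d : Decomposition G v₁ μ) :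
    ∃ k, d.edges k = G.edgeFinset := by
  have hcard : G.edgeFinset.card ≠ 0 := fun h => by
    have : IsEmpty (Fin G.edgeFinset.card) := by rw [h]; infer_instance
    simpa using d.weight_mem.2
  refine ⟨⟨G.edgeFinset.card - 1, by omega⟩, Finset.eq_of_subset_of_card_le (d.edges_subset _) ?_⟩
  rw [d.edges_mem.2.1]
  simp only
  omega

lemma memVerts_edgeFinset (d : Decomposition G v₁ μ) {x : V} (hx : μ.1 x ≠ 0) :
    memVerts G.edgeFinset x := by
  rw [← d.sum_weight_mul_meas x] at hx
  obtain ⟨k, -, hk⟩ := Finset.exists_ne_zero_of_sum_ne_zero hx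
  obtain ⟨e, he, hxe⟩ := d.memVerts_of_meas_ne_zero k x (right_ne_zero_of_mul hk)
  exact ⟨e, d.edges_subset k he, hxe⟩

lemma exists_cost_eq_realRelEntInt (d : Decomposition G v₁ μ) {q : V → V → ℝ}
    (hq : q ∈ TE G.edgeFinset) (hinv : Invariant μ.1 q) :
    ∃ d' : Decomposition G v₁ μ,
      ∀ δ, d'.cost δ = realRelEntInt μ.1 q (phat G δ G.edgeFinset) := by
  obtain ⟨L, hL⟩ := d.exists_edges_eq_edgeFinset
  refine ⟨{
    meas := Function.update d.meas L μ
    weight := Pi.single L 1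
    edges := d.edges
    kernel := Function.update d.kernel L q
    edges_mem := d.edges_mem
    weight_mem := single_mem_stdSimplex ℝ L
    memVerts_of_meas_ne_zero := fun k x hx => ?_
    sum_weight_mul_meas := fun x => by simp [Pi.single_apply]
    kernel_mem := fun k => ?_
    invariant := fun k => ?_ }, fun δ => by simp [cost, Pi.single_apply, hL]⟩
  all_goals rcases eq_or_ne k L with rfl | hk
  · exact hL ▸ d.memVerts_edgeFinset (by simpa using hx)
  · exact d.memVerts_of_meas_ne_zero k x (by simpa [hk] using hx)
  · simpa [hL] using hq
  · simpa [hk] using d.kernel_mem k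
  · simpa using hinv
  · simpa [hk] using d.invariant k

lemma weight_mul_meas_nonneg (d : Decomposition G v₁ μ) (k : Fin G.edgeFinset.card) (x : V) :
    0 ≤ d.weight k * (d.meas k).1 x :=
  mul_nonneg (d.weight_mem.1 k) ((d.meas k).2.1 x)

/-- The average of the kernels of a decomposition, weighted so that it preserves `μ`. The kernel at
level `k₀` fills the rows outside the support of `μ`. -/
def meanKernel (d : Decomposition G v₁ μ) (k₀ : Fin G.edgeFinset.card) : V → V → ℝ :=
  mixKernel (fun k x => d.weight k * (d.meas k).1 x) d.kernel (d.kernel k₀)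

lemma meanKernel_mem (d : Decomposition G v₁ μ) {k₀ : Fin G.edgeFinset.card}
    (hk₀ : d.edges k₀ = G.edgeFinset) : d.meanKernel k₀ ∈ TE G.edgeFinset := by
  refine mem_TE_iff.2 fun x => mixKernel_mem (convex_rowsTE _ x)
    (fun k => d.weight_mul_meas_nonneg k x) (fun k hk => ?_) ?_
  · obtain ⟨hnonneg, hsum, hsupp⟩ := mem_TE_iff.1 (d.kernel_mem k) x
    exact ⟨hnonneg, fun _ => hsum (d.memVerts_of_meas_ne_zero k x (right_ne_zero_of_mul hk)),
      fun y hy => d.edges_subset k (hsupp y hy)⟩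
  · exact hk₀ ▸ mem_TE_iff.1 (d.kernel_mem k₀) x

lemma invariant_meanKernel (d : Decomposition G v₁ μ) (k₀ : Fin G.edgeFinset.card) :
    Invariant μ.1 (d.meanKernel k₀) := by
  intro y
  calc ∑ x, μ.1 x * d.meanKernel k₀ x y
      = ∑ x, ∑ k, d.weight k * (d.meas k).1 x * d.kernel k x y := by
        refine Finset.sum_congr rfl fun x _ => ?_
        rw [← d.sum_weight_mul_meas x]
        exact sum_mul_mixKernel (w := fun k x => d.weight k * (d.meas k).1 x)
          (fun k => d.weight_mul_meas_nonneg k x) y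
    _ = ∑ k, d.weight k * ∑ x, (d.meas k).1 x * d.kernel k x y := by
        rw [Finset.sum_comm]
        simp only [Finset.mul_sum, mul_assoc]
    _ = μ.1 y := by
        simp only [d.invariant _ y, d.sum_weight_mul_meas y]

lemma realRelEntInt_meanKernel_le (d : Decomposition G v₁ μ) (k₀ : Fin G.edgeFinset.card)
    (p : V → V → ℝ) :
    realRelEntInt μ.1 (d.meanKernel k₀) p ≤
      ∑ k, d.weight k * realRelEntInt (d.meas k).1 (d.kernel k) p := by
  calc realRelEntInt μ.1 (d.meanKernel k₀) p
      ≤ ∑ x, ∑ k, d.weight k * (d.meas k).1 x * realRelEnt (d.kernel k x) (p x) := by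
        refine Finset.sum_le_sum fun x _ => ?_
        rw [← d.sum_weight_mul_meas x]
        exact sum_mul_realRelEnt_mixKernel_le (w := fun k x => d.weight k * (d.meas k).1 x)
          (fun k => d.weight_mul_meas_nonneg k x) (fun k => (d.kernel_mem k).1 x) (p x)
    _ = ∑ k, d.weight k * realRelEntInt (d.meas k).1 (d.kernel k) p := by
        rw [Finset.sum_comm]
        simp only [realRelEntInt, Finset.mul_sum, mul_assoc]

lemma exists_cost_le_cost_one (d : Decomposition G v₁ μ) (hδ : δ ≠ 0) :
    ∃ d' : Decomposition G v₁ μ, d'.cost δ ≤ d.cost 1 := by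
  obtain ⟨L, hL⟩ := d.exists_edges_eq_edgeFinset
  obtain ⟨d', hd'⟩ :=
    d.exists_cost_eq_realRelEntInt (d.meanKernel_mem hL) (d.invariant_meanKernel L)
  refine ⟨d', ?_⟩
  calc d'.cost δ = realRelEntInt μ.1 (d.meanKernel L) (phat G δ G.edgeFinset) := hd' δ
    _ ≤ ∑ k, d.weight k *
          realRelEntInt (d.meas k).1 (d.kernel k) (phat G δ G.edgeFinset) :=
        d.realRelEntInt_meanKernel_le L _
    _ = d.cost 1 :=
        Finset.sum_congr rfl fun k _ => by rw [phat_edgeFinset hδ (d.edges k)]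

end Decomposition

lemma Ifun_eq_iInf_cost (hδ : 0 < δ) :
    Ifun G v₁ δ μ = ⨅ d : Decomposition G v₁ μ, (d.cost δ : EReal) := by
  refine le_antisymm (le_iInf fun d => sInf_le ?_) (le_sInf ?_)
  · exact ⟨d.meas, d.weight, d.edges, d.kernel, d.edges_mem, d.weight_mem.1, d.weight_mem.2,
      d.memVerts_of_meas_ne_zero, d.sum_weight_mul_meas, d.kernel_mem, d.invariant, d.coe_cost hδ⟩
  · rintro _ ⟨νs, r, Es, qs, hE, hr, hr1, hsupp, hμ, hq, hinv, rfl⟩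
    let d : Decomposition G v₁ μ := ⟨νs, r, Es, qs, hE, ⟨hr, hr1⟩, hsupp, hμ, hq, hinv⟩
    exact (iInf_le _ d).trans_eq (d.coe_cost hδ)

lemma Ifun_le_add_log {t : ℝ} (hδ : 0 < δ) (hδ' : 0 < δ') (ht : 0 < t)
    (hp : ∀ (F : Finset (Sym2 V)) (x y : V), s(x, y) ∈ F →
      phat G δ F x y ≤ t * phat G δ' F x y) :
    Ifun G v₁ δ' μ ≤ Ifun G v₁ δ μ + (Real.log t : EReal) := by
  have hbot : (Real.log t : EReal) ≠ ⊥ := EReal.coe_ne_bot _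
  have htop : (Real.log t : EReal) ≠ ⊤ := EReal.coe_ne_top _
  rw [Ifun_eq_iInf_cost hδ, Ifun_eq_iInf_cost hδ',
    ← EReal.sub_le_iff_le_add (.inl hbot) (.inl htop)]
  refine le_iInf fun d => ?_
  rw [EReal.sub_le_iff_le_add (.inl hbot) (.inl htop)]
  exact (iInf_le _ d).trans (mod_cast d.cost_le_cost_add_log hδ ht hp)

lemma Ifun_anti (hδ : 0 < δ) (hle : δ ≤ δ') : Ifun G v₁ δ' μ ≤ Ifun G v₁ δ μ := by
  simpa using Ifun_le_add_log (G := G) (v₁ := v₁) (μ := μ) hδ (hδ.trans_le hle) one_pos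
    fun F x y hxy => (phat_le_phat hδ hle hxy).trans_eq (one_mul _).symm

lemma Ifun_le_add_log_div (hδ : 0 < δ) (hle : δ ≤ δ') :
    Ifun G v₁ δ μ ≤ Ifun G v₁ δ' μ + (Real.log (δ' / δ) : EReal) :=
  have hδ' : 0 < δ' := hδ.trans_le hle
  Ifun_le_add_log hδ' hδ (div_pos hδ' hδ) fun F x y _ => phat_le_div_mul_phat hδ hle F x y

lemma Ifun_le_add_abs_sub (hδ : 1 ≤ δ) (hδ' : 1 ≤ δ') :
    Ifun G v₁ δ μ ≤ Ifun G v₁ δ' μ + (|δ - δ'| : ℝ) := by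
  have hδ0 : 0 < δ := one_pos.trans_le hδ
  have hδ'0 : 0 < δ' := one_pos.trans_le hδ'
  rcases le_total δ' δ with hle | hle
  · exact (Ifun_anti hδ'0 hle).trans (le_add_of_nonneg_right (mod_cast abs_nonneg _))
  · have hlog : Real.log (δ' / δ) ≤ |δ - δ'| :=
      calc Real.log (δ' / δ) ≤ δ' / δ - 1 := Real.log_le_sub_one_of_pos (div_pos hδ'0 hδ0)
        _ = (δ' - δ) / δ := by field_simp
        _ ≤ δ' - δ := div_le_self (sub_nonneg.2 hle) hδ
        _ ≤ |δ - δ'| := abs_sub_comm δ δ' ▸ le_abs_self _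
    exact (Ifun_le_add_log_div hδ0 hle).trans (add_le_add_right (mod_cast hlog) _)

lemma Ifun_le_Ifun_one (hδ : 0 < δ) : Ifun G v₁ δ μ ≤ Ifun G v₁ 1 μ := by
  rw [Ifun_eq_iInf_cost hδ, Ifun_eq_iInf_cost one_pos]
  exact iInf_mono' fun d => (d.exists_cost_le_cost_one hδ.ne').imp fun _ h => mod_cast h

lemma Ifun_max_one (hδ : 0 < δ) : Ifun G v₁ (max δ 1) μ = Ifun G v₁ δ μ := by
  rcases le_total δ 1 with h | h
  · rw [max_eq_right h]
    exact (Ifun_anti hδ h).antisymm (Ifun_le_Ifun_one hδ)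
  · rw [max_eq_left h]

end RateFunction

theorem orrw_rate_uniform_continuous_general {V : Type} [Fintype V] [DecidableEq V]
    (G : SimpleGraph V) [DecidableRel G.Adj] (v₁ : V) (μ : ProbMeas V) {δ₁ δ₂ : ℝ}
    (hδ₁ : 0 < δ₁) (hδ₂ : 0 < δ₂) :
    Ifun G v₁ δ₁ μ ≤ Ifun G v₁ δ₂ μ + (|δ₁ - δ₂| : ℝ) := by
  have hmax : |max δ₁ 1 - max δ₂ 1| ≤ |δ₁ - δ₂| := abs_max_sub_max_le_abs δ₁ δ₂ 1
  rw [← Ifun_max_one hδ₁, ← Ifun_max_one hδ₂]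
  exact (Ifun_le_add_abs_sub (le_max_right _ _) (le_max_right _ _)).trans
    (add_le_add_right (mod_cast hmax) _)

/-- Uniform continuity of `δ ↦ I_δ` on `{I₁ < ∞}`. -/
theorem orrw_rate_uniform_continuous {V : Type} [Fintype V] [DecidableEq V]
    (G : SimpleGraph V) [DecidableRel G.Adj] (hG : G.Connected)
    (hV : 3 ≤ Fintype.card V) (v₁ : V) :
    ∀ ε : ℝ, 0 < ε → ∃ η : ℝ, 0 < η ∧
      ∀ δ₁ δ₂ : ℝ, 0 < δ₁ → 0 < δ₂ → |δ₁ - δ₂| < η →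
        ∀ μ : ProbMeas V, Ifun G v₁ 1 μ < ⊤ →
          Ifun G v₁ δ₁ μ ≤ Ifun G v₁ δ₂ μ + ((ε : ℝ) : EReal) ∧
          Ifun G v₁ δ₂ μ ≤ Ifun G v₁ δ₁ μ + ((ε : ℝ) : EReal) := by
  refine fun ε hε => ⟨ε, hε, fun δ₁ δ₂ hδ₁ hδ₂ hd μ _ => ⟨?_, ?_⟩⟩
  · exact (orrw_rate_uniform_continuous_general G v₁ μ hδ₁ hδ₂).trans
      (add_le_add_right (mod_cast hd.le) _)
  · exact (orrw_rate_uniform_continuous_general G v₁ μ hδ₂ hδ₁).trans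
      (add_le_add_right (mod_cast abs_sub_comm δ₁ δ₂ ▸ hd.le) _)

end ORRW
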